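/- Let F be a field of characteristic different from 2, let u ∈ F× be a non-square, and let E = F(√u). Let u′ = c + d√u ∈ E× with c, d ∈ F and d ≠ 0 (so u′ ∉ F), and suppose u′ is not a square in E; let K = E(√u′). Then, with respect to the F-basis (1, √u, √u′, √u·√u′) of K, the Gram matrix of the symmetric bilinear form associated to the quadratic form q′(k) = ½·tr_{E/F}(N_{K/E}(k)) has determinant equal to u²·N_{E/F}(u′) = u²·(c² − u d²); in particular, the discriminant of q′ equals N_{E/F}(u′) modulo squares in F×. -/

import Mathlib

theorem quad_basis {F E : Type*} [Field F] [Field E] [Algebra F E]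
    (t : F) (ht : ¬ ∃ a : F, a ^ 2 = t) (s : E) (hs : s ^ 2 = algebraMap F E t)
    (hgen : ∀ x : E, ∃ a b : F, x = algebraMap F E a + algebraMap F E b * s) :
    ∃ b : Module.Basis (Fin 2) F E, b 0 = 1 ∧ b 1 = s := by
  have hli : LinearIndependent F ![(1 : E), s] := by
    rw [LinearIndependent.pair_iff]
    intro a b hab
    rw [Algebra.smul_def, Algebra.smul_def, mul_one] at hab
    have hb : b = 0 := by
      by_contra hb
      apply ht
      refine ⟨a / b, ?_⟩
      apply (algebraMap F E).injective
      have hb' : algebraMap F E b ≠ 0 := by simpa using hb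
      rw [← hs, map_pow, map_div₀]
      have : algebraMap F E a = - (algebraMap F E b * s) := by linear_combination hab
      rw [this]
      field_simp
    subst hb
    simpa using hab
  have hsp : ⊤ ≤ Submodule.span F (Set.range ![(1 : E), s]) := by
    intro x _
    obtain ⟨a, b, rfl⟩ := hgen x
    rw [Matrix.range_cons, Matrix.range_cons, Matrix.range_empty, Set.union_empty,
      Set.singleton_union, Submodule.mem_span_pair]
    exact ⟨a, b, by rw [Algebra.smul_def, Algebra.smul_def, mul_one]⟩
  exact ⟨Module.Basis.mk hli hsp, by simp, by simp⟩

theorem quad_mat {F E : Type*} [Field F] [Field E] [Algebra F E]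
    (t : F) (s : E) (hs : s ^ 2 = algebraMap F E t)
    (b : Module.Basis (Fin 2) F E) (h0 : b 0 = 1) (h1 : b 1 = s) (x y : F) :
    Algebra.leftMulMatrix b (algebraMap F E x + algebraMap F E y * s) = !![x, t * y; y, x] := by
  have e0 : (algebraMap F E x + algebraMap F E y * s) * b 0 = x • b 0 + y • b 1 := by
    rw [h0, h1, Algebra.smul_def, Algebra.smul_def]; ring
  have e1 : (algebraMap F E x + algebraMap F E y * s) * b 1 = (t * y) • b 0 + x • b 1 := by
    rw [h0, h1, Algebra.smul_def, Algebra.smul_def, map_mul]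
    linear_combination algebraMap F E y * hs
  ext i j
  rw [Algebra.leftMulMatrix_eq_repr_mul]
  fin_cases j
  · change b.repr (_ * b 0) i = _
    rw [e0]
    fin_cases i <;> simp
  · change b.repr (_ * b 1) i = _
    rw [e1]
    fin_cases i <;> simp

/-- for `E = F(√u)` (`u` a non-square, char F ≠ 2),
`u′ = c + d√u ∈ E` with `d ≠ 0` not a square in `E`, and `K = E(√u′)`, the Gram
matrix of `q′(k) = ½·tr_{E/F}(N_{K/E}(k))` with respect to the `F`-basis
`(1, √u, √u′, √u·√u′)` of `K` has determinant `u²·N_{E/F}(u′) = u²·(c² − u·d²)`;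
in particular the discriminant of `q′` is `N_{E/F}(u′)` modulo squares. -/
theorem stmt7 {F E K : Type*} [Field F] [Field E] [Field K]
    [Algebra F E] [Algebra E K] [Algebra F K] [IsScalarTower F E K]
    [FiniteDimensional F E] [FiniteDimensional E K]
    (hchar : (2 : F) ≠ 0)
    (u : F) (hu : ¬ ∃ a : F, a ^ 2 = u)
    (sqrtu : E) (hsqrtu : sqrtu ^ 2 = algebraMap F E u)
    (hEgen : ∀ x : E, ∃ a b : F, x = algebraMap F E a + algebraMap F E b * sqrtu)
    (c d : F) (hd : d ≠ 0)
    (u' : E) (hu' : u' = algebraMap F E c + algebraMap F E d * sqrtu)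
    (hns : ¬ ∃ y : E, y ^ 2 = u')
    (sqrtu' : K) (hsqrtu' : sqrtu' ^ 2 = algebraMap E K u')
    (hKgen : ∀ x : K, ∃ a b : E, x = algebraMap E K a + algebraMap E K b * sqrtu')
    (q : K → F)
    (hq : ∀ k : K, q k = 1 / 2 * Algebra.trace F E (Algebra.norm E k))
    (B : K → K → F)
    (hB : ∀ x y : K, B x y = (q (x + y) - q x - q y) / 2) :
    (Matrix.of fun i j : Fin 4 =>
        B (![1, algebraMap E K sqrtu, sqrtu', algebraMap E K sqrtu * sqrtu'] i)
          (![1, algebraMap E K sqrtu, sqrtu', algebraMap E K sqrtu * sqrtu'] j)).det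
      = u ^ 2 * (c ^ 2 - u * d ^ 2) ∧
    (∀ bs : Module.Basis (Fin 4) F K, ∃ r : F, r ≠ 0 ∧
        (Matrix.of fun i j : Fin 4 => B (bs i) (bs j)).det
          = (c ^ 2 - u * d ^ 2) * r ^ 2) := by
  have h4 : (4 : F) ≠ 0 := by
    have : (4 : F) = 2 * 2 := by norm_num
    rw [this]; exact mul_ne_zero hchar hchar
  have hu0 : u ≠ 0 := fun h => hu ⟨0, by simp [h]⟩
  obtain ⟨bE, bE0, bE1⟩ := quad_basis u hu sqrtu hsqrtu hEgen
  obtain ⟨bK, bK0, bK1⟩ := quad_basis u' hns sqrtu' hsqrtu' hKgen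
  have htr : ∀ x y : F, Algebra.trace F E (algebraMap F E x + algebraMap F E y * sqrtu)
      = 2 * x := by
    intro x y
    rw [Algebra.trace_eq_matrix_trace bE, quad_mat u sqrtu hsqrtu bE bE0 bE1]
    simp [Matrix.trace_fin_two]; ring
  have hnm : ∀ x y : E, Algebra.norm E (algebraMap E K x + algebraMap E K y * sqrtu')
      = x ^ 2 - u' * y ^ 2 := by
    intro x y
    rw [Algebra.norm_eq_matrix_det bK, quad_mat u' sqrtu' hsqrtu' bK bK0 bK1,
      Matrix.det_fin_two_of]
    ring
  let T : (Fin 4 → F) → K := fun p =>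
    algebraMap E K (algebraMap F E (p 0) + algebraMap F E (p 1) * sqrtu) +
      algebraMap E K (algebraMap F E (p 2) + algebraMap F E (p 3) * sqrtu) * sqrtu'
  have hTadd : ∀ p r, T p + T r = T (p + r) := by
    intro p r
    simp only [T, Pi.add_apply, map_add, map_mul]; ring
  have hqT : ∀ p, q (T p) = p 0 ^ 2 + u * p 1 ^ 2
      - c * (p 2 ^ 2 + u * p 3 ^ 2) - 2 * p 2 * p 3 * u * d := by
    intro p
    rw [hq, hnm]
    have : (algebraMap F E (p 0) + algebraMap F E (p 1) * sqrtu) ^ 2 -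
        u' * (algebraMap F E (p 2) + algebraMap F E (p 3) * sqrtu) ^ 2 =
        algebraMap F E (p 0 ^ 2 + u * p 1 ^ 2
          - c * (p 2 ^ 2 + u * p 3 ^ 2) - 2 * p 2 * p 3 * u * d) +
        algebraMap F E (2 * p 0 * p 1 - 2 * c * p 2 * p 3
          - d * (p 2 ^ 2 + u * p 3 ^ 2)) * sqrtu := by
      rw [hu']
      simp only [map_add, map_sub, map_mul, map_pow, map_ofNat]
      linear_combination (algebraMap F E (p 1) ^ 2 - algebraMap F E c * algebraMap F E (p 3) ^ 2
        - 2 * algebraMap F E d * algebraMap F E (p 2) * algebraMap F E (p 3)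
        - algebraMap F E d * algebraMap F E (p 3) ^ 2 * sqrtu) * hsqrtu
    rw [this, htr]
    field_simp
  have hBT : ∀ p r, B (T p) (T r) = p 0 * r 0 + u * p 1 * r 1
      - c * (p 2 * r 2 + u * p 3 * r 3) - (p 2 * r 3 + p 3 * r 2) * u * d := by
    intro p r
    rw [hB, hTadd, hqT, hqT, hqT]
    simp only [Pi.add_apply]
    field_simp
    ring
  let G : Matrix (Fin 4) (Fin 4) F :=
    !![1, 0, 0, 0; 0, u, 0, 0; 0, 0, -c, -(u * d); 0, 0, -(u * d), -(u * c)]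
  have hG : G.det = u ^ 2 * (c ^ 2 - u * d ^ 2) := by
    simp [G, Matrix.det_succ_row_zero, Fin.sum_univ_succ, Fin.succAbove]
    ring
  have hgram : ∀ P : Matrix (Fin 4) (Fin 4) F,
      (Matrix.of fun i j : Fin 4 => B (T (P i)) (T (P j))) = P * G * P.transpose := by
    intro P
    ext i j
    rw [Matrix.of_apply, hBT]
    simp [G, Matrix.mul_apply, Fin.sum_univ_four]
    ring
  constructor
  · have hv : ∀ i, ![1, algebraMap E K sqrtu, sqrtu', algebraMap E K sqrtu * sqrtu'] i
        = T ((1 : Matrix (Fin 4) (Fin 4) F) i) := by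
      intro i
      fin_cases i <;> simp [T, Matrix.one_apply]
    simp only [hv]
    rw [hgram, ← hG]
    simp
  · intro bs
    have hsurj : ∀ k : K, ∃ p, k = T p := by
      intro k
      obtain ⟨x, y, rfl⟩ := hKgen k
      obtain ⟨a, b, rfl⟩ := hEgen x
      obtain ⟨e, f, rfl⟩ := hEgen y
      exact ⟨![a, b, e, f], by simp [T]⟩
    choose P hP using fun i => hsurj (bs i)
    let M : Matrix (Fin 4) (Fin 4) F := P
    have hM : M.det ≠ 0 := by
      intro h
      obtain ⟨z, hz, hzM⟩ := Matrix.exists_vecMul_eq_zero_iff.mpr h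
      apply hz
      have hsum : ∑ i, z i • bs i = 0 := by
        have hTz : ∑ i, z i • bs i = T (Matrix.vecMul z M) := by
          simp only [hP, T, M, Matrix.vecMul, dotProduct, Fin.sum_univ_four, Algebra.smul_def,
            IsScalarTower.algebraMap_apply F E K, map_add, map_mul]
          ring
        rw [hTz, hzM]
        simp [T]
      funext i
      exact Fintype.linearIndependent_iff.mp bs.linearIndependent z hsum i
    refine ⟨u * M.det, mul_ne_zero hu0 hM, ?_⟩
    have := hgram M
    simp only [hP]
    change (Matrix.of fun i j : Fin 4 => B (T (M i)) (T (M j))).det = _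
    rw [this, Matrix.det_mul, Matrix.det_mul, Matrix.det_transpose, hG]
    ring
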